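/- A positive real number Δ is the determinant of some IWR planar lattice if and only if Δ = M√D for some positive integers M and D with D squarefree such that the set mn_D(M) = {(m, n) : m, n coprime positive integers, D n² ≤ 3 m², m² ≤ 3 D n², and 2mn/(2^e gcd(m, D)) divides M} is nonempty, where e = 0 if 2 ∣ D or if both mn and D+1 are even, and e = 1 otherwise. -/

import Mathlib

/-- The standard inner product on the plane `ℝ × ℝ`. -/
def ip (v w : ℝ × ℝ) : ℝ := v.1 * w.1 + v.2 * w.2

/-- The planar lattice spanned by `v` and `w`. -/
def lat (v w : ℝ × ℝ) : Set (ℝ × ℝ) := {z | ∃ a b : ℤ, z = (a : ℝ) • v + (b : ℝ) • w}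

/-- The set of squared lengths of nonzero vectors of the lattice spanned by `v, w`;
its least element is the minimal norm of the lattice. -/
def normSet (v w : ℝ × ℝ) : Set ℝ := {t | ∃ z ∈ lat v w, z ≠ 0 ∧ t = ip z z}

/-- The planar lattice spanned by the linearly independent vectors `v, w` is
integral and well-rounded: all pairwise inner products of `v, w` are integers,
and the lattice contains two linearly independent minimal vectors. -/
def IsIWR (v w : ℝ × ℝ) : Prop :=
  LinearIndependent ℝ ![v, w] ∧
  ((∃ a : ℤ, ip v v = (a : ℝ)) ∧ (∃ a : ℤ, ip v w = (a : ℝ)) ∧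
    (∃ a : ℤ, ip w w = (a : ℝ))) ∧
  ∃ z₁ z₂ : ℝ × ℝ, z₁ ∈ lat v w ∧ z₂ ∈ lat v w ∧ LinearIndependent ℝ ![z₁, z₂] ∧
    IsLeast (normSet v w) (ip z₁ z₁) ∧ ip z₂ z₂ = ip z₁ z₁

/-- The determinant of the planar lattice spanned by `v, w`: the absolute value
of the determinant of the matrix with columns `v, w`. -/
def latDet (v w : ℝ × ℝ) : ℝ := |v.1 * w.2 - w.1 * v.2|

/-!
Independent minimal vectors `z₁, z₂` of a planar lattice generate it: rounding coordinates leaves a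
remainder strictly shorter than `z₁`. Hence a well-rounded integral lattice has a Gram matrix
`(q, p; p, q)` with `2|p| ≤ q`, every such matrix occurs, and its squared determinant is
`q² - p² = ab`, where `a = q + p` and `b = q - p` have the same parity and each is at most three
times the other.

If `ab = M²D` with `D` squarefree, then `a = t·dk²` and `b = t·en²` with `t = gcd(a, b)`, `D = de`
and `M = tkn`. Putting `m = dk`, so that `d = gcd(m, D)`, turns the bounds on `a / b` into the
bounds on `m² / (Dn²)`. The exponent of `2` in the statement records the parity condition: `a + b`
is even iff `t` is even or `dk²` and `en²` are both odd, the latter meaning that `D` and `mn` are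
odd.
-/

/-- The signed area of the parallelogram spanned by `v` and `w`; `latDet v w` unfolds to
`|cross v w|`. -/
def cross (v w : ℝ × ℝ) : ℝ := v.1 * w.2 - w.1 * v.2

section Plane

variable {v w : ℝ × ℝ}

lemma ip_smul_add_smul (v w : ℝ × ℝ) (a b c d : ℝ) :
    ip (a • v + b • w) (c • v + d • w) =
      a * c * ip v v + (a * d + b * c) * ip v w + b * d * ip w w := by
  simp only [ip, Prod.fst_add, Prod.snd_add, Prod.smul_fst, Prod.smul_snd, smul_eq_mul]
  ring

lemma cross_smul_add_smul (v w : ℝ × ℝ) (a b c d : ℝ) :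
    cross (a • v + b • w) (c • v + d • w) = (a * d - b * c) * cross v w := by
  simp only [cross, Prod.fst_add, Prod.snd_add, Prod.smul_fst, Prod.smul_snd, smul_eq_mul]
  ring

lemma ip_self_nonneg (v : ℝ × ℝ) : 0 ≤ ip v v :=
  add_nonneg (mul_self_nonneg _) (mul_self_nonneg _)

lemma cross_sq (v w : ℝ × ℝ) : cross v w ^ 2 = ip v v * ip w w - ip v w ^ 2 := by
  simp only [cross, ip]
  ring

lemma cross_smul_eq (v w z : ℝ × ℝ) : cross v w • z = cross z w • v + cross v z • w := by
  ext <;> simp only [cross, Prod.fst_add, Prod.snd_add, Prod.smul_fst, Prod.smul_snd,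
    smul_eq_mul] <;> ring

lemma linearIndependent_pair_iff_cross_ne_zero :
    LinearIndependent ℝ ![v, w] ↔ cross v w ≠ 0 := by
  have hbasis : LinearIndependent ℝ ![((1, 0) : ℝ × ℝ), (0, 1)] := by
    simp [LinearIndependent.pair_iff]
  have hcoord (z : ℝ × ℝ) : z = z.1 • (1, 0) + z.2 • (0, 1) := by ext <;> simp
  rw [hcoord v, hcoord w, LinearIndependent.pair_add_smul_add_smul_iff, cross_smul_add_smul]
  simp [hbasis, cross, sub_eq_zero]

lemma exists_eq_smul_add_smul_of_cross_ne_zero (h : cross v w ≠ 0) (z : ℝ × ℝ) :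
    ∃ s t : ℝ, z = s • v + t • w := by
  refine ⟨cross z w / cross v w, cross v z / cross v w, smul_right_injective _ h ?_⟩
  simp only [smul_add, smul_smul, mul_div_cancel₀ _ h, cross_smul_eq v w z]

/-- Strict Cauchy–Schwarz keeps the squared norm below `(1 / 4 + 2 * (1 / 4) + 1 / 4) * ip v v`. -/
lemma ip_smul_add_smul_lt (h : cross v w ≠ 0) (hvw : ip w w ≤ ip v v) {s t : ℝ}
    (hs : |s| ≤ 1 / 2) (ht : |t| ≤ 1 / 2) :
    ip (s • v + t • w) (s • v + t • w) < ip v v := by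
  have hq := ip_self_nonneg v
  have hvw_lt : |ip v w| < ip v v := by
    refine abs_lt_of_sq_lt_sq ?_ hq
    nlinarith [cross_sq v w, sq_pos_of_ne_zero h, mul_le_mul_of_nonneg_left hvw hq]
  have hs2 : s ^ 2 ≤ 1 / 4 := by rw [← sq_abs]; nlinarith [abs_nonneg s]
  have ht2 : t ^ 2 ≤ 1 / 4 := by rw [← sq_abs]; nlinarith [abs_nonneg t]
  have hcross : s * t * ip v w ≤ 1 / 4 * |ip v w| := by
    calc s * t * ip v w ≤ |s| * |t| * |ip v w| := by
          rw [← abs_mul, ← abs_mul]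
          exact le_abs_self _
      _ ≤ 1 / 2 * (1 / 2) * |ip v w| := by gcongr
      _ = 1 / 4 * |ip v w| := by ring
  calc ip (s • v + t • w) (s • v + t • w)
      = s ^ 2 * ip v v + 2 * (s * t * ip v w) + t ^ 2 * ip w w := by
        rw [ip_smul_add_smul]
        ring
    _ ≤ 1 / 4 * ip v v + 2 * (1 / 4 * |ip v w|) + 1 / 4 * ip v v := by
        gcongr
        exact ip_self_nonneg w
    _ < ip v v := by linarith

end Plane

section Lattice

variable {v w z₁ z₂ : ℝ × ℝ}

lemma lat_eq_span (v w : ℝ × ℝ) : lat v w = Submodule.span ℤ {v, w} := by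
  ext z
  simp [lat, Submodule.mem_span_pair, eq_comm, Int.cast_smul_eq_zsmul]

lemma left_mem_lat (v w : ℝ × ℝ) : v ∈ lat v w := ⟨1, 0, by simp⟩

lemma right_mem_lat (v w : ℝ × ℝ) : w ∈ lat v w := ⟨0, 1, by simp⟩

lemma lat_subset_lat (h₁ : z₁ ∈ lat v w) (h₂ : z₂ ∈ lat v w) : lat z₁ z₂ ⊆ lat v w := by
  rw [lat_eq_span v w] at h₁ h₂ ⊢
  rw [lat_eq_span z₁ z₂]
  exact Submodule.span_le.2 (Set.pair_subset h₁ h₂)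

lemma sub_mem_lat (h₁ : z₁ ∈ lat v w) (h₂ : z₂ ∈ lat v w) : z₁ - z₂ ∈ lat v w := by
  rw [lat_eq_span] at *
  exact sub_mem h₁ h₂

lemma exists_int_ip_of_mem_lat (hvv : ∃ a : ℤ, ip v v = a) (hvw : ∃ a : ℤ, ip v w = a)
    (hww : ∃ a : ℤ, ip w w = a) (h₁ : z₁ ∈ lat v w) (h₂ : z₂ ∈ lat v w) :
    ∃ a : ℤ, ip z₁ z₂ = a := by
  obtain ⟨A, hA⟩ := hvv
  obtain ⟨B, hB⟩ := hvw
  obtain ⟨C, hC⟩ := hww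
  obtain ⟨a, b, rfl⟩ := h₁
  obtain ⟨c, d, rfl⟩ := h₂
  refine ⟨a * c * A + (a * d + b * c) * B + b * d * C, ?_⟩
  rw [ip_smul_add_smul, hA, hB, hC]
  push_cast
  rfl

lemma latDet_le_of_mem_lat (h₁ : z₁ ∈ lat v w) (h₂ : z₂ ∈ lat v w) (h : cross z₁ z₂ ≠ 0) :
    latDet v w ≤ latDet z₁ z₂ := by
  obtain ⟨a, b, rfl⟩ := h₁
  obtain ⟨c, d, rfl⟩ := h₂
  rw [cross_smul_add_smul] at h
  have hindex : (1 : ℝ) ≤ |(a * d - b * c : ℝ)| := by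
    exact_mod_cast Int.one_le_abs (by exact_mod_cast left_ne_zero_of_mul h)
  calc |cross v w| ≤ |(a * d - b * c : ℝ)| * |cross v w| :=
        le_mul_of_one_le_left (abs_nonneg _) hindex
    _ = |cross (_ • v + _ • w) (_ • v + _ • w)| := by rw [cross_smul_add_smul, abs_mul]

lemma latDet_eq_of_lat_eq (h : lat z₁ z₂ = lat v w) (hz : cross z₁ z₂ ≠ 0) (hv : cross v w ≠ 0) :
    latDet z₁ z₂ = latDet v w :=
  (latDet_le_of_mem_lat (h ▸ left_mem_lat v w) (h ▸ right_mem_lat v w) hv).antisymm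
    (latDet_le_of_mem_lat (h ▸ left_mem_lat z₁ z₂) (h ▸ right_mem_lat z₁ z₂) hz)

lemma lat_eq_of_minimal (h₁ : z₁ ∈ lat v w) (h₂ : z₂ ∈ lat v w) (h : cross z₁ z₂ ≠ 0)
    (hmin : ip z₁ z₁ ∈ lowerBounds (normSet v w)) (heq : ip z₂ z₂ = ip z₁ z₁) :
    lat z₁ z₂ = lat v w := by
  refine (lat_subset_lat h₁ h₂).antisymm fun x hx ↦ ?_
  obtain ⟨s, t, rfl⟩ := exists_eq_smul_add_smul_of_cross_ne_zero h x
  refine ⟨round s, round t, ?_⟩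
  have hmem := sub_mem_lat hx (lat_subset_lat h₁ h₂ ⟨round s, round t, rfl⟩)
  by_contra hne
  refine (hmin ⟨_, hmem, sub_ne_zero.2 hne, rfl⟩).not_gt ?_
  rw [add_sub_add_comm, ← sub_smul, ← sub_smul]
  exact ip_smul_add_smul_lt h heq.le (abs_sub_round s) (abs_sub_round t)

lemma two_mul_abs_ip_le_of_minimal (h : cross v w ≠ 0)
    (hmin : ip v v ∈ lowerBounds (normSet v w)) : 2 * |ip v w| ≤ ip w w := by
  have hbound (ε : ℤ) (hε : (ε : ℝ) ^ 2 = 1) : 0 ≤ 2 * ε * ip v w + ip w w := by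
    have hne : (ε : ℝ) • v + ((1 : ℤ) : ℝ) • w ≠ 0 := fun h0 ↦ by
      simpa using (LinearIndependent.pair_iff.1
        (linearIndependent_pair_iff_cross_ne_zero.2 h) _ _ h0).2
    have hle := hmin ⟨_, ⟨ε, 1, rfl⟩, hne, rfl⟩
    rw [ip_smul_add_smul, Int.cast_one] at hle
    linear_combination hle + ip v v * hε
  have hadd := hbound 1 (by norm_num)
  have hsub := hbound (-1) (by norm_num)
  push_cast at hadd hsub
  rcases abs_cases (ip v w) with ⟨habs, -⟩ | ⟨habs, -⟩ <;> rw [habs] <;> linarith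

lemma one_le_sq_sub_abs_mul_add_sq {a b : ℤ} (h : a ≠ 0 ∨ b ≠ 0) :
    1 ≤ a ^ 2 - |a * b| + b ^ 2 := by
  rw [abs_mul, ← sq_abs a, ← sq_abs b]
  rcases h with h | h
  · nlinarith [Int.one_le_abs h, sq_nonneg (|a| - 2 * |b|)]
  · nlinarith [Int.one_le_abs h, sq_nonneg (2 * |a| - |b|)]

lemma ip_self_mem_lowerBounds_normSet (hvw : 2 * |ip v w| ≤ ip v v) (hw : ip v v ≤ ip w w) :
    ip v v ∈ lowerBounds (normSet v w) := by
  rintro _ ⟨_, ⟨a, b, rfl⟩, hz, rfl⟩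
  have hab : a ≠ 0 ∨ b ≠ 0 := by
    by_contra! h0
    simp [h0] at hz
  have hone : (1 : ℝ) ≤ a ^ 2 - |(a * b : ℝ)| + b ^ 2 := by
    exact_mod_cast one_le_sq_sub_abs_mul_add_sq hab
  have hcross : -(|(a * b : ℝ)| * ip v v) ≤ 2 * (a * b * ip v w) := by
    calc -(|(a * b : ℝ)| * ip v v) ≤ -(|(a * b : ℝ)| * (2 * |ip v w|)) := by gcongr
      _ = 2 * -|a * b * ip v w| := by rw [abs_mul (a * b : ℝ)]; ring
      _ ≤ 2 * (a * b * ip v w) := by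
        gcongr
        exact neg_abs_le _
  calc ip v v ≤ (a ^ 2 - |(a * b : ℝ)| + b ^ 2) * ip v v :=
        le_mul_of_one_le_left (ip_self_nonneg v) hone
    _ = a ^ 2 * ip v v + -(|(a * b : ℝ)| * ip v v) + b ^ 2 * ip v v := by ring
    _ ≤ a ^ 2 * ip v v + 2 * (a * b * ip v w) + b ^ 2 * ip w w := by gcongr
    _ = ip ((a : ℝ) • v + (b : ℝ) • w) ((a : ℝ) • v + (b : ℝ) • w) := by
        rw [ip_smul_add_smul]
        ring

end Lattice

section Gram

lemma exists_ip_eq_cross_eq {A B C Δ : ℝ} (hA : 0 < A) (h : Δ ^ 2 = A * C - B ^ 2) :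
    ∃ v w : ℝ × ℝ, ip v v = A ∧ ip v w = B ∧ ip w w = C ∧ cross v w = Δ := by
  have hr : √A ≠ 0 := (Real.sqrt_pos.2 hA).ne'
  refine ⟨(√A, 0), (B / √A, Δ / √A), ?_, ?_, ?_, ?_⟩ <;> simp only [ip, cross]
  · simp [hA.le]
  · field_simp
    ring
  · field_simp
    rw [Real.sq_sqrt hA.le, h]
    ring
  · field_simp
    ring

lemma isIWR_of_gram {v w : ℝ × ℝ} (h : cross v w ≠ 0) {q p : ℤ} (hvv : ip v v = q)
    (hvw : ip v w = p) (hww : ip w w = q) (hpq : 2 * |p| ≤ q) : IsIWR v w := by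
  have hli := linearIndependent_pair_iff_cross_ne_zero.2 h
  have hmin : ip v v ∈ lowerBounds (normSet v w) := by
    refine ip_self_mem_lowerBounds_normSet ?_ (hvv.trans hww.symm).le
    rw [hvv, hvw]
    exact_mod_cast hpq
  have hv : v ≠ 0 := hli.ne_zero 0
  exact ⟨hli, ⟨⟨q, hvv⟩, ⟨p, hvw⟩, ⟨q, hww⟩⟩, v, w, left_mem_lat v w, right_mem_lat v w, hli,
    ⟨⟨v, left_mem_lat v w, hv, rfl⟩, hmin⟩, hww.trans hvv.symm⟩

lemma exists_latDet_sq_eq_of_isIWR {v w : ℝ × ℝ} (h : IsIWR v w) :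
    ∃ q p : ℤ, 0 < q ∧ 2 * |p| ≤ q ∧ latDet v w ^ 2 = (q : ℝ) ^ 2 - (p : ℝ) ^ 2 := by
  obtain ⟨hli, ⟨hvv, hvw, hww⟩, z₁, z₂, h₁, h₂, hz, ⟨-, hmin⟩, heq⟩ := h
  rw [linearIndependent_pair_iff_cross_ne_zero] at hli hz
  have hlat : lat z₁ z₂ = lat v w := lat_eq_of_minimal h₁ h₂ hz hmin heq
  obtain ⟨q, hq⟩ := exists_int_ip_of_mem_lat hvv hvw hww h₁ h₁
  obtain ⟨p, hp⟩ := exists_int_ip_of_mem_lat hvv hvw hww h₁ h₂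
  have hred : 2 * |ip z₁ z₂| ≤ ip z₁ z₁ := by
    rw [← heq]
    refine two_mul_abs_ip_le_of_minimal hz ?_
    rwa [normSet, hlat]
  have hdet : cross z₁ z₂ ^ 2 = (q : ℝ) ^ 2 - (p : ℝ) ^ 2 := by
    rw [cross_sq, heq, hq, hp, sq (q : ℝ)]
  rw [hp, hq] at hred
  refine ⟨q, p, ?_, by exact_mod_cast hred, ?_⟩
  · have : (0 : ℝ) < q := by
      nlinarith [sq_pos_of_ne_zero hz, sq_nonneg (p : ℝ), hq ▸ ip_self_nonneg z₁]
    exact_mod_cast this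
  · rw [← latDet_eq_of_lat_eq hlat hz hli, ← hdet]
    exact sq_abs _

theorem exists_isIWR_latDet_eq_iff {Δ : ℝ} (hΔ : 0 < Δ) :
    (∃ v w : ℝ × ℝ, IsIWR v w ∧ latDet v w = Δ) ↔
      ∃ q p : ℤ, 0 < q ∧ 2 * |p| ≤ q ∧ Δ ^ 2 = (q : ℝ) ^ 2 - (p : ℝ) ^ 2 := by
  constructor
  · rintro ⟨v, w, h, rfl⟩
    exact exists_latDet_sq_eq_of_isIWR h
  · rintro ⟨q, p, hq, hpq, hdet⟩
    rw [sq (q : ℝ)] at hdet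
    obtain ⟨v, w, hvv, hvw, hww, hcross⟩ := exists_ip_eq_cross_eq (Int.cast_pos.2 hq) hdet
    refine ⟨v, w, isIWR_of_gram (hcross ▸ hΔ.ne') hvv hvw hww hpq, ?_⟩
    exact (congrArg _ hcross).trans (abs_of_pos hΔ)

end Gram

section Arithmetic

/-- The number `2mn / (2 ^ e * gcd(m, D))` that has to divide `M` for `(m, n)` to lie in `mn_D(M)`,
where `e = 0` if `2 ∣ D` or if both `mn` and `D + 1` are even, and `e = 1` otherwise. For `0 < m`
the natural-number division is exact. -/
def mnDivisor (D m n : ℕ) : ℕ :=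
  2 * m * n / (2 ^ (if 2 ∣ D ∨ (2 ∣ m * n ∧ 2 ∣ D + 1) then 0 else 1) * Nat.gcd m D)

/-- The set `mn_D(M)` of the paper, whose elements parametrize the admissible factorizations of
`M ^ 2 * D`. -/
def mnSet (D M : ℕ) : Set (ℕ × ℕ) :=
  {(m, n) | 0 < m ∧ 0 < n ∧ Nat.gcd m n = 1 ∧ D * n ^ 2 ≤ 3 * m ^ 2 ∧ m ^ 2 ≤ 3 * (D * n ^ 2) ∧
    mnDivisor D m n ∣ M}

lemma dvd_of_sq_dvd_sq_mul_squarefree {t M D : ℕ} (hD : Squarefree D) (h : t ^ 2 ∣ M ^ 2 * D) :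
    t ∣ M := by
  rcases t.eq_zero_or_pos with rfl | ht
  · simpa [hD.ne_zero] using h
  obtain ⟨t', M', hcop, ht', hM'⟩ := Nat.exists_coprime t M
  have hg : 0 < t.gcd M := Nat.gcd_pos_of_pos_left _ ht
  have hsq : t' ^ 2 ∣ D := by
    refine (hcop.pow 2 2).dvd_of_dvd_mul_left (Nat.dvd_of_mul_dvd_mul_left (pow_pos hg 2) ?_)
    rwa [← mul_assoc, ← mul_pow, ← mul_pow, mul_comm _ t', mul_comm _ M', ← ht', ← hM']
  have : t' = 1 := Nat.isUnit_iff.1 (hD t' (sq t' ▸ hsq))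
  rw [this, one_mul] at ht'
  exact ht' ▸ Nat.gcd_dvd_right t M

lemma even_add_iff_odd_mul_of_coprime {x y : ℕ} (h : x.Coprime y) :
    Even (x + y) ↔ Odd (x * y) := by
  have hnot : ¬(Even x ∧ Even y) := fun ⟨hx, hy⟩ ↦
    Nat.not_coprime_of_dvd_of_dvd one_lt_two hx.two_dvd hy.two_dvd h
  grind

lemma exists_eq_mul_sq_of_coprime_of_mul_eq {x y M D : ℕ} (hxy : x.Coprime y) (hD : 0 < D)
    (h : x * y = M ^ 2 * D) :
    ∃ d e k n : ℕ, D = d * e ∧ M = k * n ∧ x = d * k ^ 2 ∧ y = e * n ^ 2 := by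
  obtain ⟨d, e, ⟨x', rfl⟩, ⟨y', rfl⟩, rfl⟩ :=
    exists_dvd_and_dvd_of_dvd_mul (Dvd.intro_left _ h.symm)
  have hsq : x' * y' = M ^ 2 := Nat.eq_of_mul_eq_mul_right hD (by linear_combination h)
  have hcop : x'.Coprime y' := hxy.coprime_mul_left.coprime_mul_left_right
  obtain ⟨k, rfl⟩ := exists_eq_pow_of_mul_eq_pow (Nat.isUnit_iff.2 hcop) hsq
  obtain ⟨n, rfl⟩ := exists_eq_pow_of_mul_eq_pow (Nat.isUnit_iff.2 hcop.symm) (mul_comm _ y' ▸ hsq)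
  exact ⟨d, e, k, n, rfl, Nat.pow_left_injective two_ne_zero (by simpa [mul_pow] using hsq.symm),
    rfl, rfl⟩

lemma exists_eq_mul_sq_of_mul_eq {a b M D : ℕ} (hM : 0 < M) (hD : Squarefree D)
    (h : a * b = M ^ 2 * D) :
    ∃ t d e k n : ℕ, (d * k ^ 2).Coprime (e * n ^ 2) ∧ D = d * e ∧ M = t * (k * n) ∧
      a = t * (d * k ^ 2) ∧ b = t * (e * n ^ 2) := by
  obtain ⟨x, y, hxy, hx, hy⟩ := Nat.exists_coprime a b
  obtain ⟨c, rfl⟩ : a.gcd b ∣ M := by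
    refine dvd_of_sq_dvd_sq_mul_squarefree hD (h ▸ ⟨x * y, ?_⟩)
    linear_combination b * hx + a.gcd b * x * hy
  have hprod : x * y = c ^ 2 * D := by
    refine Nat.eq_of_mul_eq_mul_left (pow_pos (Nat.pos_of_mul_pos_right hM) 2) ?_
    linear_combination h - b * hx - a.gcd b * x * hy
  obtain ⟨d, e, k, n, rfl, rfl, rfl, rfl⟩ :=
    exists_eq_mul_sq_of_coprime_of_mul_eq hxy hD.ne_zero.bot_lt hprod
  exact ⟨a.gcd b, d, e, k, n, hxy, rfl, rfl, hx.trans (mul_comm _ _), hy.trans (mul_comm _ _)⟩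

lemma mnDivisor_mul {d e k : ℕ} (hd : 0 < d) (hke : k.Coprime e) (n : ℕ) :
    mnDivisor (d * e) (d * k) n = if Odd (d * e * (k * n)) then k * n else 2 * (k * n) := by
  have hgcd : (d * k).gcd (d * e) = d := by rw [Nat.gcd_mul_left, hke.gcd_eq_one, mul_one]
  have hcond : (2 ∣ d * e ∨ (2 ∣ d * k * n ∧ 2 ∣ d * e + 1)) ↔ ¬Odd (d * e * (k * n)) := by
    simp only [← even_iff_two_dvd, Nat.not_odd_iff_even, Nat.even_mul, Nat.even_add_one]
    tauto
  simp only [mnDivisor, hgcd, hcond, ite_not]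
  split_ifs <;> exact Nat.div_eq_of_eq_mul_left (by positivity) (by ring)

lemma mnDivisor_dvd_iff {d e k n : ℕ} (hd : 0 < d) (h : (d * k ^ 2).Coprime (e * n ^ 2)) (M : ℕ) :
    mnDivisor (d * e) (d * k) n ∣ M ↔
      ∃ t, M = t * (k * n) ∧ Even (t * (d * k ^ 2) + t * (e * n ^ 2)) := by
  have hke : k.Coprime e :=
    (h.coprime_mul_left.coprime_mul_right_right).coprime_dvd_left (dvd_pow_self k two_ne_zero)
  have hparity : Even (d * k ^ 2 + e * n ^ 2) ↔ Odd (d * e * (k * n)) := by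
    rw [even_add_iff_odd_mul_of_coprime h]
    simp only [Nat.odd_mul, Nat.odd_pow_iff two_ne_zero]
    tauto
  simp only [mnDivisor_mul hd hke, ← mul_add, Nat.even_mul, hparity]
  split_ifs with hodd
  · simp only [hodd, or_true, and_true, dvd_iff_exists_eq_mul_left]
  · simp only [hodd, or_false]
    constructor
    · rintro ⟨s, rfl⟩
      exact ⟨2 * s, by ring, even_two_mul s⟩
    · rintro ⟨t, rfl, ht⟩
      exact mul_dvd_mul_right ht.two_dvd _

lemma mul_mem_mnSet_iff {d e k n M : ℕ} (hM : 0 < M) (hd : 0 < d)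
    (h : (d * k ^ 2).Coprime (e * n ^ 2)) :
    (d * k, n) ∈ mnSet (d * e) M ↔
      ∃ t, M = t * (k * n) ∧ t * (d * k ^ 2) ≤ 3 * (t * (e * n ^ 2)) ∧
        t * (e * n ^ 2) ≤ 3 * (t * (d * k ^ 2)) ∧ Even (t * (d * k ^ 2) + t * (e * n ^ 2)) := by
  constructor
  · rintro ⟨-, -, -, hle, hge, hdvd⟩
    obtain ⟨t, hMt, heven⟩ := (mnDivisor_dvd_iff hd h M).1 hdvd
    refine ⟨t, hMt, Nat.le_of_mul_le_mul_left ?_ hd, Nat.le_of_mul_le_mul_left ?_ hd, heven⟩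
    · linear_combination t * hge
    · linear_combination t * hle
  · rintro ⟨t, rfl, hle, hge, heven⟩
    have ht : 0 < t := Nat.pos_of_mul_pos_right hM
    have hkn : 0 < k * n := Nat.pos_of_mul_pos_left hM
    have hk : 0 < k := Nat.pos_of_mul_pos_right hkn
    have hn : 0 < n := Nat.pos_of_mul_pos_left hkn
    refine ⟨Nat.mul_pos hd hk, hn, ?_, Nat.le_of_mul_le_mul_left ?_ ht,
      Nat.le_of_mul_le_mul_left ?_ ht, (mnDivisor_dvd_iff hd h _).2 ⟨t, rfl, heven⟩⟩
    · exact Nat.Coprime.of_dvd ⟨k, by ring⟩ ⟨e * n, by ring⟩ h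
    · linear_combination d * hge
    · linear_combination d * hle

theorem exists_mem_mnSet_iff {M D : ℕ} (hM : 0 < M) (hD : Squarefree D) :
    (∃ m n, (m, n) ∈ mnSet D M) ↔
      ∃ a b, a * b = M ^ 2 * D ∧ a ≤ 3 * b ∧ b ≤ 3 * a ∧ Even (a + b) := by
  constructor
  · rintro ⟨m, n, hmn⟩
    obtain ⟨k, e, hke, hm, hDe⟩ := Nat.exists_coprime m D
    have hd : 0 < m.gcd D := Nat.gcd_pos_of_pos_left _ hmn.1
    have hcop : m.Coprime n := hmn.2.2.1
    generalize m.gcd D = d at hm hDe hd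
    obtain rfl : m = d * k := hm.trans (mul_comm _ _)
    obtain rfl : D = d * e := hDe.trans (mul_comm _ _)
    have hde : d.Coprime e := Nat.coprime_of_squarefree_mul hD
    have h : (d * k ^ 2).Coprime (e * n ^ 2) :=
      (hde.mul_left (hke.pow_left 2)).mul_right
        ((hcop.coprime_mul_right.mul_left (hcop.coprime_mul_left.pow_left 2)).pow_right 2)
    obtain ⟨t, rfl, hle, hge, heven⟩ := (mul_mem_mnSet_iff hM hd h).1 hmn
    exact ⟨_, _, by ring, hle, hge, heven⟩
  · rintro ⟨a, b, hab, hle, hge, heven⟩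
    obtain ⟨t, d, e, k, n, h, rfl, rfl, rfl, rfl⟩ := exists_eq_mul_sq_of_mul_eq hM hD hab
    have hd : 0 < d := Nat.pos_of_ne_zero (left_ne_zero_of_mul hD.ne_zero)
    exact ⟨d * k, n, (mul_mem_mnSet_iff hM hd h).2 ⟨t, rfl, hle, hge, heven⟩⟩

lemma exists_eq_sq_sub_sq_iff {N : ℕ} (hN : 0 < N) :
    (∃ q p : ℤ, 0 < q ∧ 2 * |p| ≤ q ∧ N = q ^ 2 - p ^ 2) ↔
      ∃ a b : ℕ, a * b = N ∧ a ≤ 3 * b ∧ b ≤ 3 * a ∧ Even (a + b) := by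
  constructor
  · rintro ⟨q, p, hq, hpq, hN⟩
    obtain ⟨hlower, hupper⟩ := abs_le.1 (show |2 * p| ≤ q by rwa [abs_mul])
    lift q + p to ℕ using (by lia) with a ha
    lift q - p to ℕ using (by lia) with b hb
    refine ⟨a, b, ?_, by lia, by lia, by grind⟩
    zify
    rw [ha, hb, hN]
    ring
  · rintro ⟨a, b, rfl, hle, hge, q, hq⟩
    have ha : 0 < a := Nat.pos_of_mul_pos_right hN
    refine ⟨q, a - q, by lia, ?_, ?_⟩
    · rcases abs_cases ((a : ℤ) - q) with ⟨habs, -⟩ | ⟨habs, -⟩ <;> rw [habs] <;> lia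
    · have hb : (b : ℤ) = 2 * q - a := by lia
      push_cast
      rw [hb]
      ring

lemma exists_eq_mul_sqrt_of_sq_eq_natCast {x : ℝ} (hx : 0 < x) {N : ℕ} (h : x ^ 2 = N) :
    ∃ M D : ℕ, 0 < M ∧ 0 < D ∧ Squarefree D ∧ N = M ^ 2 * D ∧ x = M * √D := by
  have hN : 0 < N := by exact_mod_cast h ▸ pow_pos hx 2
  obtain ⟨D, M, hD, hM, rfl, hsf⟩ := Nat.sq_mul_squarefree_of_pos hN
  refine ⟨M, D, hM, hD, hsf, rfl, ?_⟩
  rw [← Real.sqrt_sq hx.le, h, Nat.cast_mul, Nat.cast_pow, Real.sqrt_mul (sq_nonneg _),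
    Real.sqrt_sq M.cast_nonneg]

end Arithmetic

/-- The determinant characterization of Theorem 1.4: `Δ > 0` is the determinant
of some IWR planar lattice iff `Δ = M√D` with `D` squarefree and the set
`mn_D(M)` nonempty. -/
theorem stmt12 (Δ : ℝ) (hΔ : 0 < Δ) :
    (∃ v w : ℝ × ℝ, IsIWR v w ∧ latDet v w = Δ) ↔
    ∃ M D : ℕ, 0 < M ∧ 0 < D ∧ Squarefree D ∧ Δ = (M : ℝ) * Real.sqrt (D : ℝ) ∧
      ∃ m n : ℕ, 0 < m ∧ 0 < n ∧ Nat.gcd m n = 1 ∧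
        D * n ^ 2 ≤ 3 * m ^ 2 ∧ m ^ 2 ≤ 3 * (D * n ^ 2) ∧
        (2 * m * n /
          (2 ^ (if 2 ∣ D ∨ (2 ∣ m * n ∧ 2 ∣ D + 1) then 0 else 1) * Nat.gcd m D)) ∣ M := by
  rw [exists_isIWR_latDet_eq_iff hΔ]
  constructor
  · rintro ⟨q, p, hq, hpq, hdet⟩
    obtain ⟨N, hN⟩ : ∃ N : ℕ, (N : ℤ) = q ^ 2 - p ^ 2 :=
      ⟨_, Int.toNat_of_nonneg (sub_nonneg.2 (sq_le_sq.2 (by rw [abs_of_pos hq]; lia)))⟩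
    have hΔN : Δ ^ 2 = N := by rw [hdet]; exact_mod_cast hN.symm
    obtain ⟨M, D, hM, hD, hsf, rfl, hΔM⟩ := exists_eq_mul_sqrt_of_sq_eq_natCast hΔ hΔN
    exact ⟨M, D, hM, hD, hsf, hΔM, (exists_mem_mnSet_iff hM hsf).2
      ((exists_eq_sq_sub_sq_iff (by positivity)).1 ⟨q, p, hq, hpq, hN⟩)⟩
  · rintro ⟨M, D, hM, hD, hsf, rfl, hmn⟩
    obtain ⟨q, p, hq, hpq, hN⟩ := (exists_eq_sq_sub_sq_iff (by positivity)).2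
      ((exists_mem_mnSet_iff hM hsf).1 hmn)
    refine ⟨q, p, hq, hpq, ?_⟩
    rw [mul_pow, Real.sq_sqrt D.cast_nonneg]
    exact_mod_cast hN
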